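/- arXiv:1209.5277 — 7 statements merged into one kernel-verified Lean document; each statement's English description precedes it below -/
import Mathlib

section
/- Assume α_0 is neither zero nor a negative integer and no other α_i is a negative integer. Then for every x ∈ ℂ∖{0}, D_μ j_μ(x) = (r α_0 / x) · j_{μ−1}(x), where μ−1 = (α_0 − 1, α_1, …, α_{r−1}). -/
open Complex MeasureTheory Real Filter Topology

noncomputable section

/-- ω = exp(2πi/r) -/
def om (r : ℕ) : ℂ := Complex.exp (2 * Real.pi * Complex.I / r)

/-- θ = exp(iπ/r) -/
def th (r : ℕ) : ℂ := Complex.exp (Real.pi * Complex.I / r)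

/-- projector T_k -/
def Tk (r k : ℕ) (g : ℂ → ℂ) (x : ℂ) : ℂ :=
  (r : ℂ)⁻¹ * ∑ n ∈ Finset.range r, om r ^ (k * n) * g (om r ^ n * x)

/-- L_a f = f' + (a/x) f -/
def Lop (a : ℝ) (f : ℂ → ℂ) (x : ℂ) : ℂ := deriv f x + (a / x) * f x

/-- a_k = r α_k + k -/
def acoef (r : ℕ) (α : ℕ → ℝ) (k : ℕ) : ℝ := r * α k + k

/-- Δ_μ = L_{a_{r-1}} ∘ ⋯ ∘ L_{a_0} -/
def Delta (r : ℕ) (α : ℕ → ℝ) (f : ℂ → ℂ) : ℂ → ℂ :=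
  (List.range r).foldl (fun g i => Lop (acoef r α i) g) f

/-- D_μ -/
def Dop (r : ℕ) (α : ℕ → ℝ) (f : ℂ → ℂ) (x : ℂ) : ℂ :=
  deriv f x + (1 / x) * ∑ k ∈ Finset.range r, ((acoef r α k : ℝ) : ℂ) * Tk r k f x

/-- Pochhammer symbol (β)_n -/
def poch (β : ℝ) (n : ℕ) : ℝ := (ascPochhammer ℝ n).eval β

/-- Bessel function of vector index -/
def jmu (r : ℕ) (α : ℕ → ℝ) (z : ℂ) : ℂ :=
  ∑' n : ℕ, (-1 : ℂ) ^ n * z ^ (n * r) /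
    ((∏ i ∈ Finset.range r, ((poch (α i + 1) n : ℝ) : ℂ)) * (r : ℂ) ^ (n * r))

/-- r-Dunkl kernel -/
def Emu (r : ℕ) (α : ℕ → ℝ) (z : ℂ) : ℂ :=
  ∑ k ∈ Finset.range r, th r ^ (-(k : ℤ)) * (Dop r α)^[k] (jmu r α) z

/-- generalized cosine -/
def cosr (r : ℕ) (z : ℂ) : ℂ :=
  ∑' n : ℕ, (-1 : ℂ) ^ n * z ^ (n * r) /
    ((∏ i ∈ Finset.range r, ((poch (1 - (i : ℝ) / r) n : ℝ) : ℂ)) * (r : ℂ) ^ (n * r))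

/-- weight w_μ on [0,1]^r -/
def wmu (r : ℕ) (α : ℕ → ℝ) (u : Fin r → ℝ) : ℝ :=
  ∏ i : Fin r, (1 - u i ^ r) ^ (α i.1 + (i.1 : ℝ) / r - 1) * u i ^ (r - (i.1 + 1))

/-- constant c_μ -/
def cmu (r : ℕ) (α : ℕ → ℝ) : ℝ :=
  ∏ i ∈ Finset.range r,
    r * Real.Gamma (α i + 1) / (Real.Gamma (α i + (i : ℝ) / r) * Real.Gamma (1 - (i : ℝ) / r))

/-- L_{a_{k-1}} ∘ ⋯ ∘ L_{a_0} -/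
def Lcomp (r : ℕ) (α : ℕ → ℝ) (k : ℕ) (f : ℂ → ℂ) : ℂ → ℂ :=
  (List.range k).foldl (fun g i => Lop (acoef r α i) g) f

/-- r-Riemann–Liouville on the half line -/
def Rop (r : ℕ) (a : ℝ) (g : ℝ → ℂ) (x : ℝ) : ℂ :=
  ∫ t in (0:ℝ)..1, g (x * t) * (((1 - t ^ r) ^ (a - 1) : ℝ) : ℂ)

/-- r-Riemann–Liouville along rays in ℂ -/
def RopC (r : ℕ) (a : ℝ) (f : ℂ → ℂ) (z : ℂ) : ℂ :=
  ∫ t in (0:ℝ)..1, f (z * t) * (((1 - t ^ r) ^ (a - 1) : ℝ) : ℂ)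

/-- the operator M h = (1/(r x^{r-1})) h' -/
def Mop (r : ℕ) (h : ℝ → ℂ) (x : ℝ) : ℂ := ((1 / (r * x ^ (r - 1)) : ℝ) : ℂ) * deriv h x

/-- hermitian product ⟨f,g⟩_a -/
def inr (r : ℕ) (a : ℝ) (f g : ℂ → ℂ) : ℂ :=
  ∫ t in Set.Ioi (0:ℝ),
    (∑ m ∈ Finset.range r, f (om r ^ m * t) * (starRingEnd ℂ) (g (om r ^ m * t))) *
      ((t ^ a : ℝ) : ℂ)

/-- transmutation operator V_μ -/
def Vmu (r : ℕ) (α : ℕ → ℝ) (h : ℂ → ℂ) (x : ℂ) : ℂ :=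
  (cmu r α : ℂ) *
    ∫ u in Set.univ.pi (fun _ : Fin r => Set.Icc (0:ℝ) 1),
      (Tk r 0 (fun z => h (z * ∏ i, (u i : ℂ))) x +
        ∑ k ∈ Finset.Ico 1 r,
          th r ^ (-(k : ℤ)) * Tk r k (Lcomp r α k (fun z => h (z * ∏ i, (u i : ℂ)))) x) *
        ((wmu r α u : ℝ) : ℂ)

theorem poch_succ' (b : ℝ) (n : ℕ) : poch b (n+1) = poch b n * (b + n) := by
  simp [poch, ascPochhammer_succ_eval]

theorem poch_shift (b : ℝ) (n : ℕ) : b * poch (b+1) n = poch b n * (b + n) := by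
  rw [← poch_succ']
  simp [poch, ascPochhammer_succ_left]

theorem poch_ne (b : ℝ) (h : ∀ n : ℕ, b + n ≠ 0) (n : ℕ) : poch b n ≠ 0 := by
  induction n with
  | zero => simp [poch]
  | succ k ih => rw [poch_succ']; exact mul_ne_zero ih (h k)

/-- term -/
def jterm (r : ℕ) (α : ℕ → ℝ) (n : ℕ) (z : ℂ) : ℂ :=
  (-1 : ℂ) ^ n * z ^ (n * r) /
    ((∏ i ∈ Finset.range r, ((poch (α i + 1) n : ℝ) : ℂ)) * (r : ℂ) ^ (n * r))

theorem jterm_succ (r : ℕ) (α : ℕ → ℝ) (n : ℕ) (z : ℂ) :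
    jterm r α (n+1) z = jterm r α n z *
      ((-1) * z ^ r * ((r:ℂ) ^ r)⁻¹ * ∏ i ∈ Finset.range r, (((α i + 1 + n : ℝ) : ℂ))⁻¹) := by
  simp only [jterm, poch_succ', Complex.ofReal_mul, Finset.prod_mul_distrib, Finset.prod_inv_distrib,
    Nat.succ_mul, pow_add, pow_one, div_eq_mul_inv, mul_inv]
  ring

theorem jterm_summable (r : ℕ) (hr : 2 ≤ r) (α : ℕ → ℝ)
    (h : ∀ i < r, ∀ n : ℕ, α i + 1 + n ≠ 0) (z : ℂ) (hz : z ≠ 0) :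
    Summable (fun n => ‖jterm r α n z‖) := by
  have hne : ∀ n, jterm r α n z ≠ 0 := by
    intro n
    have hr0 : (r : ℂ) ≠ 0 := by
      have : r ≠ 0 := by omega
      exact_mod_cast this
    unfold jterm
    refine div_ne_zero (mul_ne_zero (by simp) (pow_ne_zero _ hz)) (mul_ne_zero ?_ (pow_ne_zero _ hr0))
    rw [Finset.prod_ne_zero_iff]
    intro i hi
    exact_mod_cast poch_ne _ (h i (Finset.mem_range.1 hi)) n
  refine summable_of_ratio_test_tendsto_lt_one (l := 0) one_pos
    (Eventually.of_forall fun n => by simpa using hne n) ?_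
  have : ∀ n, ‖‖jterm r α (n+1) z‖‖ / ‖‖jterm r α n z‖‖ =
      ‖(-1) * z ^ r * ((r:ℂ) ^ r)⁻¹ * ∏ i ∈ Finset.range r, (((α i + 1 + n : ℝ) : ℂ))⁻¹‖ := by
    intro n
    have h1 : ‖jterm r α n z‖ ≠ 0 := by simpa using hne n
    rw [norm_norm, norm_norm, jterm_succ, norm_mul, mul_div_cancel_left₀ _ h1]
  simp only [this]
  have hp : Tendsto (fun n : ℕ => ∏ i ∈ Finset.range r, (((α i + 1 + n : ℝ) : ℂ))⁻¹) atTop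
      (𝓝 (∏ i ∈ Finset.range r, (0:ℂ))) := by
    refine tendsto_finsetProd _ fun i _ => ?_
    have h2 : Tendsto (fun n : ℕ => (α i + 1 + n : ℝ)⁻¹) atTop (𝓝 0) :=
      tendsto_inv_atTop_zero.comp (tendsto_atTop_add_const_left _ _ tendsto_natCast_atTop_atTop)
    have h3 := (Complex.continuous_ofReal.tendsto 0).comp h2
    simpa [Function.comp_def] using h3
  have h4 := (hp.const_mul ((-1) * z ^ r * ((r:ℂ) ^ r)⁻¹)).norm
  have h5 : r ≠ 0 := by omega
  simpa [h5] using h4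

theorem om_prim (r : ℕ) (hr : 2 ≤ r) : IsPrimitiveRoot (om r) r :=
  Complex.isPrimitiveRoot_exp r (by omega)

theorem jmu_om (r : ℕ) (hr : 2 ≤ r) (α : ℕ → ℝ) (n : ℕ) (x : ℂ) :
    jmu r α (om r ^ n * x) = jmu r α x := by
  unfold jmu
  congr 1; ext m
  have : (om r ^ n * x) ^ (m * r) = x ^ (m * r) := by
    rw [mul_pow, ← pow_mul, show n * (m * r) = r * (n * m) by ring, pow_mul,
      (om_prim r hr).pow_eq_one, one_pow, one_mul]
  rw [this]

theorem Tk_jmu (r : ℕ) (hr : 2 ≤ r) (α : ℕ → ℝ) (k : ℕ) (hk : k < r) (x : ℂ) :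
    Tk r k (jmu r α) x = if k = 0 then jmu r α x else 0 := by
  unfold Tk
  simp only [jmu_om r hr, ← Finset.sum_mul]
  have hr0 : (r : ℂ) ≠ 0 := by
    have : r ≠ 0 := by omega
    exact_mod_cast this
  split_ifs with h
  · subst h; simp [hr0]
  · have hne : om r ^ k ≠ 1 := (om_prim r hr).pow_ne_one_of_pos_of_lt h hk
    have : ∑ n ∈ Finset.range r, om r ^ (k * n) = 0 := by
      simp only [pow_mul]
      rw [geom_sum_eq hne, ← pow_mul, mul_comm, pow_mul, (om_prim r hr).pow_eq_one]
      simp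
    simp [this]

theorem stmt3 (r : ℕ) (hr : 2 ≤ r) (α : ℕ → ℝ)
    (hα0 : ∀ n : ℕ, α 0 ≠ -(n : ℝ))
    (hα : ∀ i, 1 ≤ i → i < r → ∀ n : ℕ, α i ≠ -((n : ℝ) + 1)) :
    ∀ x : ℂ, x ≠ 0 →
      Dop r α (jmu r α) x =
        (r : ℂ) * (α 0 : ℝ) / x * jmu r (Function.update α 0 (α 0 - 1)) x := by
  intro x hx
  have hne : ∀ i < r, ∀ n : ℕ, α i + 1 + n ≠ 0 := by
    intro i hi n h0
    rcases Nat.eq_zero_or_pos i with rfl | hp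
    · apply hα0 (n+1); push_cast; linarith
    · apply hα i hp hi n; linarith
  have hsum := jterm_summable r hr α hne
  have hj : jmu r α = fun z => ∑' n, jterm r α n z := rfl
  have hderiv : HasSum (fun n => deriv (jterm r α n) x) (deriv (jmu r α) x) := by
    rw [hj]
    have hR : ((‖x‖ + 1 : ℝ) : ℂ) ≠ 0 := by
      have : ‖x‖ + 1 ≠ 0 := by positivity
      exact_mod_cast this
    refine hasSum_deriv_of_summable_norm (U := Metric.ball 0 (‖x‖ + 1)) (hsum _ hR) ?_
      Metric.isOpen_ball ?_ (by simp)
    · intro n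
      unfold jterm
      fun_prop
    · intro n w hw
      have hw' : ‖w‖ ≤ ‖x‖ + 1 := by simpa using (mem_ball_zero_iff.1 hw).le
      have hn : ‖((‖x‖ + 1 : ℝ) : ℂ)‖ = ‖x‖ + 1 := by
        rw [Complex.norm_real, Real.norm_of_nonneg (by positivity)]
      unfold jterm
      rw [norm_div, norm_div, norm_mul _ (w ^ _), norm_mul _ (((‖x‖ + 1 : ℝ) : ℂ) ^ _), norm_pow w, norm_pow ((‖x‖ + 1 : ℝ) : ℂ), hn]
      gcongr
  have hd : ∀ n, deriv (jterm r α n) x = (n * r : ℕ) / x * jterm r α n x := by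
    intro n
    have e : jterm r α n = fun z => ((-1 : ℂ) ^ n / ((∏ i ∈ Finset.range r, ((poch (α i + 1) n : ℝ) : ℂ)) * (r : ℂ) ^ (n * r))) * z ^ (n * r) := by
      ext z; unfold jterm; ring
    rw [e, deriv_const_mul_field, deriv_pow_field]
    rcases Nat.eq_zero_or_pos (n * r) with h | h
    · rw [h]; simp
    · obtain ⟨m, hm⟩ := Nat.exists_eq_succ_of_ne_zero h.ne'
      rw [hm]
      simp only [Nat.succ_eq_add_one, Nat.add_sub_cancel, pow_succ]
      field_simp
  have hT : ∑ k ∈ Finset.range r, ((acoef r α k : ℝ) : ℂ) * Tk r k (jmu r α) x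
      = r * (α 0 : ℝ) * jmu r α x := by
    rw [Finset.sum_eq_single_of_mem 0 (Finset.mem_range.2 (by omega))]
    · rw [Tk_jmu r hr α 0 (by omega)]; simp [acoef]
    · intro k hk hk0
      rw [Tk_jmu r hr α k (Finset.mem_range.1 hk)]; simp [hk0]
  have hkey : ∀ n, deriv (jterm r α n) x + (1 / x) * (r * (α 0 : ℝ) * jterm r α n x) =
      (r : ℂ) * (α 0 : ℝ) / x * jterm r (Function.update α 0 (α 0 - 1)) n x := by
    intro n
    rw [hd]
    obtain ⟨s, rfl⟩ : ∃ s, r = s + 1 := ⟨r - 1, by omega⟩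
    unfold jterm
    rw [Finset.prod_range_succ', Finset.prod_range_succ']
    have e0 : Function.update α 0 (α 0 - 1) 0 + 1 = α 0 := by simp
    have e1 : ∀ i, Function.update α 0 (α 0 - 1) (i+1) = α (i+1) := by
      intro i; simp
    simp only [e0, e1]
    have hs : ((α 0 : ℝ) : ℂ) * (poch (α 0 + 1) n : ℝ) = (poch (α 0) n : ℝ) * ((α 0 : ℝ) + n) := by
      exact_mod_cast poch_shift (α 0) n
    have p1 : ((poch (α 0 + 1) n : ℝ) : ℂ) ≠ 0 := by
      exact_mod_cast poch_ne _ (hne 0 (by omega)) n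
    have p0 : ((poch (α 0) n : ℝ) : ℂ) ≠ 0 := by
      have : ∀ n : ℕ, α 0 + n ≠ 0 := fun n h => hα0 n (by linarith)
      exact_mod_cast poch_ne _ this n
    have hdiv : (((α 0 : ℝ) : ℂ) + n) / (poch (α 0 + 1) n : ℝ) = (α 0 : ℝ) / (poch (α 0) n : ℝ) := by
      rw [div_eq_div_iff p1 p0, hs]; ring
    simp only [div_eq_mul_inv, mul_inv] at hdiv ⊢
    push_cast
    push_cast at hdiv
    generalize (∏ k ∈ Finset.range s, ((poch (α (k + 1) + 1) n : ℝ) : ℂ))⁻¹ = P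
    linear_combination ((s:ℂ) + 1) * x⁻¹ * (-1)^n * x ^ (n * (s+1)) * P * (((s:ℂ)+1) ^ (n * (s+1)))⁻¹ * hdiv
  have hs1 : HasSum (fun n => jterm r α n x) (jmu r α x) := (hsum x hx).of_norm.hasSum
  have := hderiv.add ((hs1.mul_left ((r:ℂ) * (α 0 : ℝ))).mul_left (1 / x))
  unfold Dop
  rw [hT, ← this.tsum_eq]
  simp only [hkey]
  rw [tsum_mul_left]
  rfl
end
end

section
/- Assume α_i + i/r > 0 for every i = 0,…,r−1 (in particular α_0 > 0). Then for every x ∈ ℂ, j_μ(x) = c_μ ∫_{[0,1]^r} cos_r(x · u_0 u_1 ⋯ u_{r−1}) w_μ(u) du. -/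
open Complex MeasureTheory Real Filter Topology

noncomputable section

lemma aux_beta (r m : ℕ) (hr : 0 < r) (a b : ℝ) (ha : 0 < a) (hb : 0 < b)
    (hm : (r : ℝ) * b = m + 1) :
    IntegrableOn (fun u : ℝ => u ^ m * (1 - u ^ r) ^ (a - 1)) (Set.Icc 0 1) ∧
    ∫ u in Set.Icc (0:ℝ) 1, u ^ m * (1 - u ^ r) ^ (a - 1) =
      ProbabilityTheory.beta b a / r := by
  have hr' : (0:ℝ) < r := by exact_mod_cast hr
  have hbeta := ProbabilityTheory.beta_pos hb ha
  have hnn : 0 ≤ᵐ[volume] ProbabilityTheory.betaPDFReal b a := by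
    refine Filter.Eventually.of_forall fun x => ?_
    by_cases h : 0 < x ∧ x < 1
    · exact (ProbabilityTheory.betaPDFReal_pos h.1 h.2 hb ha).le
    · simp [ProbabilityTheory.betaPDFReal, h]
  have h1 : ∫⁻ x, ENNReal.ofReal (ProbabilityTheory.betaPDFReal b a x) = 1 :=
    ProbabilityTheory.lintegral_betaPDF_eq_one hb ha
  have hint : Integrable (ProbabilityTheory.betaPDFReal b a) := by
    refine ⟨(ProbabilityTheory.measurable_betaPDFReal b a).aestronglyMeasurable, ?_⟩
    rw [hasFiniteIntegral_iff_ofReal hnn, h1]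
    simp
  have hval : ∫ x, ProbabilityTheory.betaPDFReal b a x = 1 := by
    rw [integral_eq_lintegral_of_nonneg_ae hnn hint.1, h1]; simp
  have hval' : ∫ x in Set.Ioi 0, ProbabilityTheory.betaPDFReal b a x = 1 := by
    rw [setIntegral_eq_integral_of_forall_compl_eq_zero, hval]
    intro x hx
    simp only [Set.mem_Ioi] at hx
    simp [ProbabilityTheory.betaPDFReal, hx]
  have key : Set.EqOn (fun x : ℝ => ((r:ℝ) * x ^ ((r:ℝ) - 1)) •
        ProbabilityTheory.betaPDFReal b a (x ^ (r:ℝ)))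
      (Set.indicator (Set.Ioo 0 1) (fun u : ℝ =>
        (r / ProbabilityTheory.beta b a) * (u ^ m * (1 - u ^ r) ^ (a - 1)))) (Set.Ioi 0) := by
    intro x hx
    have hx0 : 0 < x := hx
    have hp : 0 < x ^ (r:ℝ) := Real.rpow_pos_of_pos hx0 _
    by_cases h : x < 1
    · have h2 : x ^ (r:ℝ) < 1 := Real.rpow_lt_one hx0.le h hr'
      have hmem : x ∈ Set.Ioo (0:ℝ) 1 := ⟨hx0, h⟩
      simp only [ProbabilityTheory.betaPDFReal, hp, h2, and_self, if_true,
        Set.indicator_of_mem hmem, smul_eq_mul]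
      have e : x ^ ((r:ℝ) - 1) * (x ^ (r:ℝ)) ^ (b - 1) = x ^ m := by
        rw [← Real.rpow_mul hx0.le, ← Real.rpow_add hx0, ← Real.rpow_natCast]
        congr 1
        linarith
      rw [← e, Real.rpow_natCast]
      ring
    · have h2 : ¬ x ^ (r:ℝ) < 1 := not_lt.2 (Real.one_le_rpow (not_lt.1 h) hr'.le)
      have hmem : x ∉ Set.Ioo (0:ℝ) 1 := fun hh => h hh.2
      simp only [ProbabilityTheory.betaPDFReal, h2, and_false, if_false, smul_zero,
        Set.indicator_of_notMem hmem]
  have hI : IntegrableOn (Set.indicator (Set.Ioo 0 1) (fun u : ℝ =>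
        (r / ProbabilityTheory.beta b a) * (u ^ m * (1 - u ^ r) ^ (a - 1)))) (Set.Ioi 0) := by
    refine IntegrableOn.congr_fun ?_ key measurableSet_Ioi
    have := (integrableOn_Ioi_comp_rpow_iff (ProbabilityTheory.betaPDFReal b a) hr'.ne').2
      hint.integrableOn
    simpa only [abs_of_pos hr'] using this
  have hsub : Set.Ioo (0:ℝ) 1 ∩ Set.Ioi 0 = Set.Ioo 0 1 := by
    ext x; simp; tauto
  have hV := setIntegral_congr_fun (μ := volume) measurableSet_Ioi key
  rw [integral_comp_rpow_Ioi_of_pos hr', hval', setIntegral_indicator measurableSet_Ioo,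
    Set.inter_comm, hsub, integral_const_mul] at hV
  have hI2 : IntegrableOn (fun u : ℝ =>
        (r / ProbabilityTheory.beta b a) * (u ^ m * (1 - u ^ r) ^ (a - 1))) (Set.Ioo 0 1) := by
    rw [integrableOn_indicator_iff measurableSet_Ioo, hsub] at hI
    exact hI
  have hI3 := hI2.const_mul (ProbabilityTheory.beta b a / r)
  constructor
  · rw [integrableOn_Icc_iff_integrableOn_Ioo]
    refine hI3.congr (Filter.Eventually.of_forall fun x => ?_)
    simp only
    field_simp
  · rw [integral_Icc_eq_integral_Ioo]
    field_simp at hV ⊢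
    linarith

lemma aux_poch (β : ℝ) (hβ : 0 < β) (n : ℕ) :
    Real.Gamma (β + n) = poch β n * Real.Gamma β := by
  induction n with
  | zero => simp [poch]
  | succ n ih =>
    have : β + ((n+1 : ℕ) : ℝ) = (β + n) + 1 := by push_cast; ring
    rw [this, Real.Gamma_add_one (by positivity), ih]
    simp only [poch, ascPochhammer_succ_eval]
    ring

lemma aux_poch_lower (r : ℕ) (hr : 0 < r) (β : ℝ) (hβ : (1:ℝ) / r ≤ β) (n : ℕ) :
    1 ≤ poch β n * (r : ℝ) ^ n := by
  have hr' : (0:ℝ) < r := by exact_mod_cast hr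
  induction n with
  | zero => simp [poch]
  | succ n ih =>
    have : poch β (n+1) * (r : ℝ) ^ (n+1) = (poch β n * (r : ℝ) ^ n) * ((β + n) * r) := by
      simp only [poch, ascPochhammer_succ_eval]; ring
    rw [this]
    refine one_le_mul_of_one_le_of_one_le ih ?_
    rw [div_le_iff₀ hr'] at hβ
    have : (0:ℝ) ≤ n * r := by positivity
    nlinarith

lemma aux_prod_lower (r : ℕ) (hr : 0 < r) (n : ℕ) :
    (n.factorial : ℝ) ≤
      (∏ i ∈ Finset.range r, poch (1 - (i : ℝ) / r) n) * (r : ℝ) ^ (n * r) := by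
  have hr' : (0:ℝ) < r := by exact_mod_cast hr
  have e : (∏ i ∈ Finset.range r, poch (1 - (i : ℝ) / r) n) * (r : ℝ) ^ (n * r)
      = ∏ i ∈ Finset.range r, (poch (1 - (i : ℝ) / r) n * (r:ℝ) ^ n) := by
    rw [Finset.prod_mul_distrib, Finset.prod_const, Finset.card_range, pow_mul]
  rw [e, ← Finset.mul_prod_erase _ _ (Finset.mem_range.2 hr)]
  have h0 : (n.factorial : ℝ) ≤ poch (1 - ((0:ℕ) : ℝ) / r) n * (r:ℝ) ^ n := by
    have : poch (1 - ((0:ℕ) : ℝ) / r) n = n.factorial := by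
      simp [poch, ascPochhammer_eval_one]
    rw [this]
    exact le_mul_of_one_le_right (by positivity) (one_le_pow₀ (by exact_mod_cast hr))
  refine h0.trans (le_mul_of_one_le_right ((Nat.cast_nonneg _).trans h0) ?_)
  refine Finset.one_le_prod ?_
  intro i hi
  have hi' := Finset.mem_range.1 (Finset.mem_of_mem_erase hi)
  refine aux_poch_lower r hr _ ?_ n
  have : (i:ℝ) + 1 ≤ r := by exact_mod_cast hi'
  rw [div_le_iff₀ hr', sub_mul, div_mul_cancel₀ _ hr'.ne']
  linarith

theorem stmt6 (r : ℕ) (hr : 2 ≤ r) (α : ℕ → ℝ)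
    (hα : ∀ i < r, ∀ n : ℕ, α i ≠ -((n : ℝ) + 1))
    (hpos : ∀ i < r, 0 < α i + (i : ℝ) / r) :
    ∀ x : ℂ,
      jmu r α x = (cmu r α : ℂ) *
        ∫ u in Set.univ.pi (fun _ : Fin r => Set.Icc (0:ℝ) 1),
          cosr r (x * ∏ i, (u i : ℂ)) * ((wmu r α u : ℝ) : ℂ) := by
  intro x
  have hr0 : 0 < r := by omega
  have hr' : (0:ℝ) < r := by exact_mod_cast hr0
  have hlt : ∀ i < r, (i:ℝ) / r < 1 := fun i hi => by
    rw [div_lt_one hr']; exact_mod_cast hi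
  set S := Set.univ.pi (fun _ : Fin r => Set.Icc (0:ℝ) 1) with hS
  have hSm : MeasurableSet S := MeasurableSet.univ_pi fun _ => measurableSet_Icc
  -- one-dimensional factors
  let f : ℕ → Fin r → ℝ → ℝ := fun n i t =>
    t ^ (n * r + (r - (i.1 + 1))) * (1 - t ^ r) ^ (α i.1 + (i.1 : ℝ) / r - 1)
  have hf : ∀ n i, IntegrableOn (f n i) (Set.Icc 0 1) ∧
      ∫ t in Set.Icc (0:ℝ) 1, f n i t =
        ProbabilityTheory.beta (n + (1 - (i.1:ℝ)/r)) (α i.1 + (i.1:ℝ)/r) / r := by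
    intro n i
    refine aux_beta r _ hr0 _ _ (hpos i.1 i.2) ?_ ?_
    · have := hlt i.1 i.2
      have : (0:ℝ) ≤ n := by positivity
      linarith
    · have h : i.1 + 1 ≤ r := i.2
      push_cast [Nat.cast_sub h]
      field_simp
      ring
  let P : ℕ → (Fin r → ℝ) → ℝ := fun n u => ∏ i, f n i (u i)
  have hPint : ∀ n, Integrable (P n) (volume.restrict S) := by
    intro n
    rw [hS, volume_pi, Measure.restrict_pi_pi]
    exact Integrable.fintype_prod fun i => (hf n i).1
  have hPval : ∀ n, ∫ u in S, P n u =
      ∏ i : Fin r, (ProbabilityTheory.beta (n + (1 - (i.1:ℝ)/r)) (α i.1 + (i.1:ℝ)/r) / r) := by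
    intro n
    rw [hS, volume_pi, Measure.restrict_pi_pi]
    refine (integral_fintype_prod_eq_prod (𝕜 := ℝ) (f n)).trans ?_
    exact Finset.prod_congr rfl fun i _ => (hf n i).2
  have hPw : ∀ n u, P n u = (∏ i, u i) ^ (n * r) * wmu r α u := by
    intro n u
    simp only [P, f, wmu]
    rw [← Finset.prod_pow, ← Finset.prod_mul_distrib]
    refine Finset.prod_congr rfl fun i _ => ?_
    rw [pow_add]; ring
  have hw0 : ∀ u ∈ S, 0 ≤ wmu r α u := by
    intro u hu
    refine Finset.prod_nonneg fun i _ => ?_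
    have hi := hu i (Set.mem_univ i)
    have : u i ^ r ≤ 1 := pow_le_one₀ hi.1 hi.2
    exact mul_nonneg (Real.rpow_nonneg (by linarith) _) (pow_nonneg hi.1 _)
  have hw1 : ∀ n, ∀ u ∈ S, ‖P n u‖ ≤ P 0 u := by
    intro n u hu
    rw [hPw, hPw]
    have h0 : 0 ≤ ∏ i, u i := Finset.prod_nonneg fun i _ => (hu i (Set.mem_univ i)).1
    have h1 : ∏ i, u i ≤ 1 := Finset.prod_le_one (fun i _ => (hu i (Set.mem_univ i)).1)
      fun i _ => (hu i (Set.mem_univ i)).2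
    have h2 := hw0 u hu
    rw [Real.norm_of_nonneg (by positivity)]
    simp only [zero_mul, pow_zero]
    exact mul_le_mul_of_nonneg_right (pow_le_one₀ h0 h1) h2
  let Q : ℕ → ℝ := fun n =>
    (∏ i ∈ Finset.range r, poch (1 - (i : ℝ) / r) n) * (r : ℝ) ^ (n * r)
  let C : ℕ → ℂ := fun n => (-1 : ℂ) ^ n * x ^ (n * r) / ((Q n : ℝ) : ℂ)
  have hC : ∀ n, ‖C n‖ ≤ (‖x‖ ^ r) ^ n / n.factorial := by
    intro n
    have hq : (n.factorial : ℝ) ≤ Q n := aux_prod_lower r hr0 n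
    have hfp : (0:ℝ) < n.factorial := by exact_mod_cast n.factorial_pos
    simp only [C, norm_div, norm_mul, norm_pow, norm_neg, norm_one, one_pow, one_mul,
      Complex.norm_real]
    rw [Real.norm_of_nonneg (hfp.le.trans hq), ← pow_mul, mul_comm r n]
    gcongr
  let F : ℕ → (Fin r → ℝ) → ℂ := fun n u => C n * ((P n u : ℝ) : ℂ)
  have hFint : ∀ n, Integrable (F n) (volume.restrict S) := fun n =>
    ((hPint n).ofReal).const_mul (C n)
  have hFsum : Summable fun n => ∫ u in S, ‖F n u‖ := by
    have hs := (Real.summable_pow_div_factorial (‖x‖ ^ r)).mul_right (∫ u in S, P 0 u)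
    refine Summable.of_nonneg_of_le (fun n => integral_nonneg fun u => norm_nonneg _) ?_ hs
    intro n
    rw [← integral_const_mul]
    refine setIntegral_mono_on (hFint n).norm ((hPint 0).const_mul _) hSm ?_
    intro u hu
    simp only [F, norm_mul, Complex.norm_real]
    exact mul_le_mul (hC n) (hw1 n u hu) (norm_nonneg _) (by positivity)
  have hmain := (hasSum_integral_of_summable_integral_norm hFint hFsum).tsum_eq
  have hR : ∀ u, cosr r (x * ∏ i, (u i : ℂ)) * ((wmu r α u : ℝ) : ℂ) = ∑' n, F n u := by
    intro u
    rw [cosr, ← tsum_mul_right]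
    refine tsum_congr fun n => ?_
    simp only [F, C, Q, hPw]
    push_cast
    rw [mul_pow]
    ring
  simp_rw [hR]
  rw [← hmain, ← tsum_mul_left, jmu]
  refine tsum_congr fun n => ?_
  simp only [F]
  rw [integral_const_mul, integral_complex_ofReal, hPval]
  have hfin : cmu r α * (∏ i : Fin r,
      (ProbabilityTheory.beta (n + (1 - (i.1:ℝ)/r)) (α i.1 + (i.1:ℝ)/r) / r)) *
      (∏ i ∈ Finset.range r, poch (α i + 1) n) =
      ∏ i ∈ Finset.range r, poch (1 - (i : ℝ) / r) n := by
    rw [Fin.prod_univ_eq_prod_range (fun i : ℕ =>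
      ProbabilityTheory.beta (n + (1 - (i:ℝ)/r)) (α i + (i:ℝ)/r) / r) r, cmu,
      ← Finset.prod_mul_distrib, ← Finset.prod_mul_distrib]
    refine Finset.prod_congr rfl fun i hi => ?_
    have hi' := Finset.mem_range.1 hi
    have h1 := hlt i hi'
    have h2 := hpos i hi'
    have h3 : 0 < 1 - (i:ℝ)/r := by linarith
    have h4 : 0 < α i + 1 := by linarith
    have g1 := Real.Gamma_pos_of_pos h2
    have g2 := Real.Gamma_pos_of_pos h3
    have g3 := Real.Gamma_pos_of_pos h4
    have p4 : 0 < poch (α i + 1) n := ascPochhammer_pos n _ h4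
    have e : (n:ℝ) + (1 - (i:ℝ)/r) + (α i + (i:ℝ)/r) = (α i + 1) + n := by ring
    rw [ProbabilityTheory.beta, e, aux_poch _ h4, add_comm (n:ℝ), aux_poch _ h3]
    generalize Real.Gamma (α i + (i:ℝ)/r) = A at *
    generalize Real.Gamma (1 - (i:ℝ)/r) = B at *
    generalize Real.Gamma (α i + 1) = D at *
    generalize poch (1 - (i:ℝ)/r) n = E at *
    field_simp
  have hne1 : (∏ i ∈ Finset.range r, poch (α i + 1) n) ≠ 0 := by
    refine Finset.prod_ne_zero_iff.2 fun i hi => ?_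
    have hi' := Finset.mem_range.1 hi
    exact (ascPochhammer_pos n _ (by linarith [hlt i hi', hpos i hi'])).ne'
  have hne2 : (∏ i ∈ Finset.range r, poch (1 - (i : ℝ) / r) n) ≠ 0 := by
    refine Finset.prod_ne_zero_iff.2 fun i hi => ?_
    have hi' := Finset.mem_range.1 hi
    exact (ascPochhammer_pos n _ (by linarith [hlt i hi'])).ne'
  simp only [C, Q]
  generalize (∏ i : Fin r,
      (ProbabilityTheory.beta (n + (1 - (i.1:ℝ)/r)) (α i.1 + (i.1:ℝ)/r) / r)) = I at *
  rw [← Complex.ofReal_prod]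
  generalize (∏ i ∈ Finset.range r, poch (α i + 1) n) = A at *
  generalize (∏ i ∈ Finset.range r, poch (1 - (i : ℝ) / r) n) = B at *
  have hA : (A:ℂ) ≠ 0 := by exact_mod_cast hne1
  have hB : (B:ℂ) ≠ 0 := by exact_mod_cast hne2
  have hrc : (r:ℂ) ≠ 0 := by exact_mod_cast hr0.ne'
  have hfc : ((cmu r α : ℝ) : ℂ) * (I:ℂ) * (A:ℂ) = B := by exact_mod_cast hfin
  push_cast
  have e : ((cmu r α : ℝ) : ℂ) * ((-1) ^ n * x ^ (n * r) / (↑B * (r:ℂ) ^ (n * r)) * (I:ℂ))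
      = (-1) ^ n * x ^ (n * r) * (((cmu r α : ℝ) : ℂ) * (I:ℂ) * A) / (A * (↑B * (r:ℂ) ^ (n * r))) := by
    field_simp
  refine Eq.trans ?_ e.symm
  rw [hfc]
  field_simp
end
end

section
/- Let r be a positive integer, 0 < α < 1, and let g : [0,∞) → ℂ be continuous. Then for every t > 0, the function F(t) = ∫_0^t (R_α g)(x) (t^r − x^r)^{−α} x^{αr} dx is differentiable at t and (r/(Γ(α) Γ(1−α))) F'(t) = g(t). In other words, the operator g ↦ (r/(Γ(α)Γ(1−α))) (d/dt) ∫_0^t g(x)(t^r−x^r)^{−α} x^{αr} dx is a left inverse of R_α. -/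
open Complex MeasureTheory Real Filter Topology

noncomputable section

/-- the two-variable kernel -/
def kerK (r : ℕ) (a s x u : ℝ) : ℝ :=
  x ^ (r - 1) * ((s ^ r - x ^ r) ^ (-a) * (x ^ r - u ^ r) ^ (a - 1))

lemma beta_real (a : ℝ) (ha0 : 0 < a) (ha1 : a < 1) :
    IntegrableOn (fun z : ℝ => z ^ (a - 1) * (1 - z) ^ (-a)) (Set.Ioo 0 1) ∧
    ∫ z in Set.Ioo (0:ℝ) 1, z ^ (a - 1) * (1 - z) ^ (-a) = Real.Gamma a * Real.Gamma (1 - a) := by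
  have hc := Complex.betaIntegral_convergent (u := (a:ℂ)) (v := ((1 - a : ℝ):ℂ))
    (by simpa using ha0) (by simpa using ha1)
  rw [intervalIntegrable_iff_integrableOn_Ioo_of_le zero_le_one] at hc
  have he : ∀ z ∈ Set.Ioo (0:ℝ) 1, (z:ℂ) ^ ((a:ℂ) - 1) * (1 - (z:ℂ)) ^ (((1 - a : ℝ):ℂ) - 1)
      = ((z ^ (a - 1) * (1 - z) ^ (-a) : ℝ) : ℂ) := by
    intro z hz
    rw [Complex.ofReal_mul, Complex.ofReal_cpow hz.1.le, Complex.ofReal_cpow (by linarith [hz.2])]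
    push_cast
    congr 2
    ring
  constructor
  · have := (integrableOn_congr_fun he measurableSet_Ioo).1 hc
    have h2 := this.re
    simp only [RCLike.re_to_complex, Complex.ofReal_re] at h2
    exact h2
  · have hb := Complex.Gamma_mul_Gamma_eq_betaIntegral (s := (a:ℂ)) (t := ((1 - a : ℝ):ℂ))
      (by simpa using ha0) (by simpa using ha1)
    have h1 : (a:ℂ) + ((1 - a : ℝ):ℂ) = 1 := by push_cast; ring
    rw [h1, Complex.Gamma_one, one_mul, Complex.betaIntegral,
      intervalIntegral.integral_of_le zero_le_one, integral_Ioc_eq_integral_Ioo,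
      setIntegral_congr_fun measurableSet_Ioo he, integral_complex_ofReal,
      Complex.Gamma_ofReal, Complex.Gamma_ofReal] at hb
    exact_mod_cast hb.symm

lemma image_pow (r : ℕ) (hr : 0 < r) (u s : ℝ) (hu : 0 ≤ u) (hus : u < s) :
    (fun x : ℝ => (x ^ r - u ^ r) / (s ^ r - u ^ r)) '' Set.Ioo u s = Set.Ioo 0 1 := by
  have hD : 0 < s ^ r - u ^ r := sub_pos.2 (pow_lt_pow_left₀ hus hu hr.ne')
  apply Set.Subset.antisymm
  · rintro _ ⟨x, hx, rfl⟩
    have h1 : u ^ r < x ^ r := pow_lt_pow_left₀ hx.1 hu hr.ne'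
    have h2 : x ^ r < s ^ r := pow_lt_pow_left₀ hx.2 (hu.trans hx.1.le) hr.ne'
    refine ⟨div_pos (by linarith) hD, ?_⟩
    show _ / _ < _
    rw [div_lt_one hD]; linarith
  · have := intermediate_value_Ioo (f := fun x : ℝ => (x ^ r - u ^ r) / (s ^ r - u ^ r)) hus.le
      (by fun_prop)
    simpa [hD.ne'] using this

lemma beta_ker (r : ℕ) (hr : 0 < r) (a : ℝ) (ha0 : 0 < a) (ha1 : a < 1)
    (u s : ℝ) (hu : 0 ≤ u) (hus : u < s) :
    IntegrableOn (fun x => kerK r a s x u) (Set.Ioo u s) ∧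
    ∫ x in Set.Ioo u s, kerK r a s x u = Real.Gamma a * Real.Gamma (1 - a) / r := by
  have hD : 0 < s ^ r - u ^ r := sub_pos.2 (pow_lt_pow_left₀ hus hu hr.ne')
  set D := s ^ r - u ^ r with hDdef
  have hr' : (0:ℝ) < r := by exact_mod_cast hr
  have hder : ∀ x ∈ Set.Ioo u s, HasDerivWithinAt (fun x : ℝ => (x ^ r - u ^ r) / D)
      (r * x ^ (r - 1) / D) (Set.Ioo u s) x := fun x _ =>
    (((hasDerivAt_pow r x).sub_const _).div_const _).hasDerivWithinAt
  have hinj : Set.InjOn (fun x : ℝ => (x ^ r - u ^ r) / D) (Set.Ioo u s) := by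
    intro x hx y hy hxy
    have h0 : x ^ r = y ^ r := by
      have := (div_left_inj' hD.ne').1 hxy
      linarith
    exact (pow_left_inj₀ (hu.trans hx.1.le) (hu.trans hy.1.le) hr.ne').1 h0
  obtain ⟨hi, hv⟩ := beta_real a ha0 ha1
  rw [← image_pow r hr u s hu hus] at hi hv
  rw [integrableOn_image_iff_integrableOn_abs_deriv_smul measurableSet_Ioo hder hinj] at hi
  rw [integral_image_eq_integral_abs_deriv_smul measurableSet_Ioo hder hinj] at hv
  have he : ∀ x ∈ Set.Ioo u s, |r * x ^ (r - 1) / D| •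
      (((x ^ r - u ^ r) / D) ^ (a - 1) * (1 - (x ^ r - u ^ r) / D) ^ (-a))
      = r * kerK r a s x u := by
    intro x hx
    have hx0 : 0 < x := hu.trans_lt hx.1
    have h1 : u ^ r < x ^ r := pow_lt_pow_left₀ hx.1 hu hr.ne'
    have h2 : x ^ r < s ^ r := pow_lt_pow_left₀ hx.2 hx0.le hr.ne'
    have h3 : 1 - (x ^ r - u ^ r) / D = (s ^ r - x ^ r) / D := by
      field_simp
      rw [hDdef]; ring
    rw [h3, abs_of_pos (by positivity), Real.div_rpow (by linarith) hD.le,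
      Real.div_rpow (by linarith) hD.le, Real.rpow_neg hD.le a, Real.rpow_sub_one hD.ne', smul_eq_mul, kerK]
    have : D ^ a ≠ 0 := (Real.rpow_pos_of_pos hD a).ne'
    field_simp
  have hi' := (integrableOn_congr_fun he measurableSet_Ioo).1 hi
  rw [setIntegral_congr_fun measurableSet_Ioo he, integral_const_mul] at hv
  refine ⟨?_, ?_⟩
  · have := hi'.const_mul (r:ℝ)⁻¹
    refine (integrableOn_congr_fun (fun x _ => ?_) measurableSet_Ioo).1 this
    field_simp
  · rw [← hv]; field_simp

lemma Rop_eq (r : ℕ) (hr : 0 < r) (a : ℝ) (g h : ℝ → ℂ) (hgh : ∀ x, 0 ≤ x → g x = h x)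
    (x s : ℝ) (hx : 0 < x) :
    Rop r a g x * (((s ^ r - x ^ r) ^ (-a) * x ^ (a * r) : ℝ) : ℂ) =
      ∫ u in Set.Ioo 0 x, h u * (kerK r a s x u : ℂ) := by
  have h1 : Rop r a g x = ∫ t in (0:ℝ)..1, (fun u : ℝ => h u *
      (((x ^ r - u ^ r) ^ (a - 1) * (x ^ r) ^ (1 - a) : ℝ) : ℂ)) (x * t) := by
    rw [Rop]
    apply intervalIntegral.integral_congr
    intro t ht
    rw [Set.uIcc_of_le zero_le_one] at ht
    have ht1 : t ^ r ≤ 1 := pow_le_one₀ ht.1 ht.2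
    have hxr : 0 < x ^ r := by positivity
    simp only
    rw [hgh _ (mul_nonneg hx.le ht.1)]
    congr 2
    rw [show x ^ r - (x * t) ^ r = x ^ r * (1 - t ^ r) by rw [mul_pow]; ring,
      Real.mul_rpow hxr.le (by linarith), mul_right_comm, ← Real.rpow_add hxr]
    simp
  rw [h1, intervalIntegral.integral_comp_mul_left (fun u : ℝ => h u *
      (((x ^ r - u ^ r) ^ (a - 1) * (x ^ r) ^ (1 - a) : ℝ) : ℂ)) hx.ne', mul_zero, mul_one,
    intervalIntegral.integral_of_le hx.le, integral_Ioc_eq_integral_Ioo, Complex.real_smul,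
    mul_right_comm, ← Complex.ofReal_mul, ← integral_const_mul]
  congr 1
  ext u
  rw [mul_left_comm, ← Complex.ofReal_mul]
  congr 2
  rw [kerK]
  have hp : x ^ (a * r) = (x ^ r) ^ a := by
    rw [mul_comm, Real.rpow_mul hx.le, Real.rpow_natCast]
  have hq : (x ^ r) ^ (1 - a) * (x ^ r) ^ a = x ^ r := by
    rw [← Real.rpow_add (by positivity)]; simp
  have hxx : x⁻¹ * x ^ r = x ^ (r - 1) := by
    obtain ⟨n, rfl⟩ := Nat.exists_eq_succ_of_ne_zero hr.ne'
    simp [pow_succ]; field_simp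
  rw [hp, ← hxx]
  linear_combination (x⁻¹ * (s ^ r - x ^ r) ^ (-a) * (x ^ r - u ^ r) ^ (a - 1)) * hq

lemma F_eq (r : ℕ) (hr : 0 < r) (a : ℝ) (ha0 : 0 < a) (ha1 : a < 1)
    (g h : ℝ → ℂ) (hgh : ∀ x, 0 ≤ x → g x = h x) (hh : Continuous h) (s : ℝ) (hs : 0 < s) :
    ∫ x in (0:ℝ)..s, Rop r a g x * (((s ^ r - x ^ r) ^ (-a) * x ^ (a * r) : ℝ) : ℂ) =
      (∫ u in (0:ℝ)..s, h u) * ((Real.Gamma a * Real.Gamma (1 - a) / r : ℝ) : ℂ) := by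
  set C := Real.Gamma a * Real.Gamma (1 - a) / r with hC
  set G : ℝ → ℝ → ℂ := fun x u =>
    h u * ((if u < x then kerK r a s x u else 0 : ℝ) : ℂ) with hG
  set μ := volume.restrict (Set.Ioo 0 s) with hμ
  -- slices
  have hind : ∀ u, (fun x => if u < x then kerK r a s x u else 0) =
      (Set.Ioi u).indicator (fun x => kerK r a s x u) := by
    intro u; ext x; simp [Set.indicator_apply]
  have hres : ∀ u ∈ Set.Ioo 0 s, (volume.restrict (Set.Ioo 0 s)).restrict (Set.Ioi u)
      = volume.restrict (Set.Ioo u s) := by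
    intro u hu
    rw [Measure.restrict_restrict measurableSet_Ioi]
    congr 1
    ext x; simp only [Set.mem_inter_iff, Set.mem_Ioi, Set.mem_Ioo]
    constructor
    · rintro ⟨h1, h2, h3⟩; exact ⟨h1, h3⟩
    · rintro ⟨h1, h3⟩; exact ⟨h1, hu.1.trans h1, h3⟩
  have hsi : ∀ u ∈ Set.Ioo 0 s,
      Integrable (fun x => if u < x then kerK r a s x u else 0) μ := by
    intro u hu
    rw [hind, integrable_indicator_iff measurableSet_Ioi, IntegrableOn, hμ, hres u hu]
    exact (beta_ker r hr a ha0 ha1 u s hu.1.le hu.2).1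
  have hsv : ∀ u ∈ Set.Ioo 0 s,
      ∫ x, (if u < x then kerK r a s x u else 0) ∂μ = C := by
    intro u hu
    rw [hind, integral_indicator measurableSet_Ioi, hμ, hres u hu]
    exact (beta_ker r hr a ha0 ha1 u s hu.1.le hu.2).2
  have hpos : ∀ u ∈ Set.Ioo 0 s, ∀ x ∈ Set.Ioo 0 s,
      0 ≤ (if u < x then kerK r a s x u else 0) := by
    intro u hu x hx
    split_ifs with hux
    · have h1 : u ^ r < x ^ r := pow_lt_pow_left₀ hux hu.1.le hr.ne'
      have h2 : x ^ r < s ^ r := pow_lt_pow_left₀ hx.2 hx.1.le hr.ne'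
      have := hx.1
      exact mul_nonneg (by positivity) (mul_nonneg (Real.rpow_nonneg (by linarith) _)
        (Real.rpow_nonneg (by linarith) _))
    · exact le_rfl
  have hmeas : Measurable (Function.uncurry G) := by
    have hk : Measurable (fun p : ℝ × ℝ => if p.2 < p.1 then kerK r a s p.1 p.2 else 0) := by
      refine Measurable.ite (measurableSet_lt measurable_snd measurable_fst) ?_ measurable_const
      unfold kerK
      fun_prop
    exact (hh.measurable.comp measurable_snd).mul (Complex.measurable_ofReal.comp hk)
  have hint : Integrable (Function.uncurry G) (μ.prod μ) := by
    rw [integrable_prod_iff' hmeas.aestronglyMeasurable]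
    constructor
    · refine (ae_restrict_iff' measurableSet_Ioo).2 (Eventually.of_forall fun u hu => ?_)
      exact ((hsi u hu).ofReal (𝕜 := ℂ)).const_mul (h u)
    · have hI : Integrable (fun u => ‖h u‖ * C) μ :=
        ((hh.norm.continuousOn.integrableOn_Icc).mono_set Set.Ioo_subset_Icc_self).mul_const C
      refine hI.congr ?_
      refine (ae_restrict_iff' measurableSet_Ioo).2 (Eventually.of_forall fun u hu => ?_)
      simp only [Function.uncurry, hG, norm_mul]
      rw [integral_const_mul, ← hsv u hu]
      congr 1
      refine setIntegral_congr_fun measurableSet_Ioo fun x hx => ?_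
      rw [Complex.norm_real, Real.norm_of_nonneg (hpos u hu x hx)]
  have hswap := integral_integral_swap hint
  rw [intervalIntegral.integral_of_le hs.le, integral_Ioc_eq_integral_Ioo,
    intervalIntegral.integral_of_le hs.le, integral_Ioc_eq_integral_Ioo, ← integral_mul_const]
  trans ∫ x, ∫ u, G x u ∂μ ∂μ
  · refine setIntegral_congr_fun measurableSet_Ioo fun x hx => ?_
    rw [Rop_eq r hr a g h hgh x s hx.1]
    have : (fun u => G x u) = (Set.Iio x).indicator (fun u => h u * (kerK r a s x u : ℂ)) := by
      ext u; by_cases hux : u < x <;> simp [hG, Set.indicator_apply, hux]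
    rw [this, integral_indicator measurableSet_Iio, hμ, Measure.restrict_restrict measurableSet_Iio]
    congr 2
    ext u; simp only [Set.mem_inter_iff, Set.mem_Iio, Set.mem_Ioo]
    constructor
    · rintro ⟨h1, h2⟩; exact ⟨h2, h1, h2.trans hx.2⟩
    · rintro ⟨h1, h2, h3⟩; exact ⟨h2, h1⟩
  · rw [hswap]
    refine setIntegral_congr_fun measurableSet_Ioo fun u hu => ?_
    simp only [hG]
    rw [integral_const_mul, integral_complex_ofReal, hsv u hu]

theorem stmt8 (r : ℕ) (hr : 0 < r) (a : ℝ) (ha0 : 0 < a) (ha1 : a < 1)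
    (g : ℝ → ℂ) (hg : ContinuousOn g (Set.Ici 0)) :
    ∀ t : ℝ, 0 < t → ∃ d : ℂ,
      HasDerivAt
        (fun s : ℝ => ∫ x in (0:ℝ)..s, Rop r a g x * (((s ^ r - x ^ r) ^ (-a) * x ^ (a * r) : ℝ) : ℂ)) d t ∧
      ((r / (Real.Gamma a * Real.Gamma (1 - a)) : ℝ) : ℂ) * d = g t := by
  intro t ht
  have hh : Continuous (fun x : ℝ => g (max x 0)) :=
    hg.comp_continuous (by fun_prop) (fun x => le_max_right x 0)
  have hgh : ∀ x : ℝ, 0 ≤ x → g x = (fun x : ℝ => g (max x 0)) x := by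
    intro x hx; simp [hx]
  refine ⟨g t * ((Real.Gamma a * Real.Gamma (1 - a) / r : ℝ) : ℂ), ?_, ?_⟩
  · have h1 := (hh.integral_hasStrictDerivAt 0 t).hasDerivAt.mul_const
      ((Real.Gamma a * Real.Gamma (1 - a) / r : ℝ) : ℂ)
    rw [max_eq_left ht.le] at h1
    refine h1.congr_of_eventuallyEq ?_
    filter_upwards [lt_mem_nhds ht] with s hs
    exact F_eq r hr a ha0 ha1 g _ hgh hh s hs
  · rw [mul_left_comm, ← Complex.ofReal_mul]
    have h1 := (Real.Gamma_pos_of_pos ha0).ne'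
    have h2 := (Real.Gamma_pos_of_pos (show 0 < 1 - a by linarith)).ne'
    have h3 : (r:ℝ) ≠ 0 := by exact_mod_cast hr.ne'
    rw [show (r / (Real.Gamma a * Real.Gamma (1 - a)) * (Real.Gamma a * Real.Gamma (1 - a) / r) : ℝ) = 1 by
      field_simp]
    simp
end
end

section
/- Let r be a positive integer, k ≥ 0 an integer, and let g : [0,∞) → ℂ be continuous. Let M be the operator (M h)(x) = (1/(r x^{r−1})) h'(x) and set F(x) = ∫_0^x g(u)(x^r − u^r)^k du. Then for every x > 0, (r/k!) · x^{r−1} · (M^{k+1} F)(x) = g(x). -/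
open Complex MeasureTheory Real Filter Topology

noncomputable section

def Fk (r k : ℕ) (g : ℝ → ℂ) (s : ℝ) : ℂ :=
  ∫ u in (0:ℝ)..s, g u * (((s ^ r - u ^ r) ^ k : ℝ) : ℂ)

lemma Fk_succ (r k : ℕ) (g : ℝ → ℂ) (hg : Continuous g) (s : ℝ) :
    Fk r (k+1) g s = ((s ^ r : ℝ) : ℂ) * Fk r k g s
      - Fk r k (fun u => g u * ((u ^ r : ℝ) : ℂ)) s := by
  unfold Fk
  rw [← intervalIntegral.integral_const_mul, ← intervalIntegral.integral_sub]
  · congr 1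
    ext u
    push_cast
    ring
  · exact Continuous.intervalIntegrable (by fun_prop) _ _
  · exact Continuous.intervalIntegrable (by fun_prop) _ _

lemma Fk_zero_deriv (r : ℕ) (g : ℝ → ℂ) (hg : Continuous g) (s : ℝ) :
    HasDerivAt (Fk r 0 g) (g s) s := by
  have : Fk r 0 g = fun s => ∫ u in (0:ℝ)..s, g u := by
    ext s; simp [Fk]
  rw [this]
  exact intervalIntegral.integral_hasDerivAt_right (hg.intervalIntegrable _ _)
    (hg.stronglyMeasurableAtFilter _ _) hg.continuousAt

lemma pow_hd (r : ℕ) (s : ℝ) :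
    HasDerivAt (fun s : ℝ => ((s ^ r : ℝ) : ℂ)) ((r * s ^ (r-1) : ℝ) : ℂ) s :=
  (hasDerivAt_pow r s).ofReal_comp

lemma Fk_succ_deriv (r k : ℕ) : ∀ (g : ℝ → ℂ) (_ : Continuous g) (s : ℝ),
    HasDerivAt (Fk r (k+1) g) ((k+1) * ((r * s ^ (r-1) : ℝ) : ℂ) * Fk r k g s) s := by
  induction k with
  | zero =>
    intro g hg s
    rw [funext (Fk_succ r 0 g hg)]
    refine HasDerivAt.congr_deriv (((pow_hd r s).mul (Fk_zero_deriv r g hg s)).sub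
      (Fk_zero_deriv r (fun u => g u * ((u ^ r : ℝ) : ℂ)) (by fun_prop) s)) ?_
    push_cast
    ring
  | succ k ih =>
    intro g hg s
    rw [funext (Fk_succ r (k+1) g hg)]
    refine HasDerivAt.congr_deriv (((pow_hd r s).mul (ih g hg s)).sub
      (ih (fun u => g u * ((u ^ r : ℝ) : ℂ)) (by fun_prop) s)) ?_
    have := Fk_succ r k g hg s
    generalize Fk r k g s = a at *
    rw [this]
    push_cast
    ring

lemma Mop_congr (r : ℕ) (f h : ℝ → ℂ) (H : ∀ x, 0 < x → f x = h x) :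
    ∀ x, 0 < x → Mop r f x = Mop r h x := by
  intro x hx
  have : f =ᶠ[𝓝 x] h := by
    filter_upwards [lt_mem_nhds hx] with y hy using H y hy
  simp only [Mop, this.deriv_eq]

lemma Mop_iter_congr (r n : ℕ) : ∀ (f h : ℝ → ℂ) (_ : ∀ x, 0 < x → f x = h x),
    ∀ x, 0 < x → (Mop r)^[n] f x = (Mop r)^[n] h x := by
  induction n with
  | zero => intro f h H; simpa using H
  | succ n ih =>
    intro f h H
    simp only [Function.iterate_succ, Function.comp]
    exact ih _ _ (Mop_congr r f h H)

lemma Mop_smul (r : ℕ) (c : ℂ) (f : ℝ → ℂ) :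
    Mop r (fun x => c * f x) = fun x => c * Mop r f x := by
  ext x
  simp only [Mop, deriv_const_mul_field]
  ring

lemma Mop_iter_smul (r n : ℕ) (c : ℂ) : ∀ (f : ℝ → ℂ),
    (Mop r)^[n] (fun x => c * f x) = fun x => c * (Mop r)^[n] f x := by
  induction n with
  | zero => intro f; rfl
  | succ n ih =>
    intro f
    simp only [Function.iterate_succ, Function.comp]
    rw [Mop_smul, ih]

lemma main_cont (r : ℕ) (hr : 0 < r) (g : ℝ → ℂ) (hg : Continuous g) (k : ℕ) :
    ∀ x : ℝ, 0 < x → (r : ℂ) * ((x ^ (r-1) : ℝ) : ℂ) * (Mop r)^[k+1] (Fk r k g) x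
      = (Nat.factorial k : ℂ) * g x := by
  have hr' : (r : ℂ) ≠ 0 := by exact_mod_cast hr.ne'
  induction k with
  | zero =>
    intro x hx
    have hx' : (x : ℂ) ≠ 0 := by exact_mod_cast hx.ne'
    simp only [zero_add, Function.iterate_one, Mop, (Fk_zero_deriv r g hg x).deriv]
    push_cast
    field_simp
    simp
  | succ k ih =>
    intro x hx
    have H : ∀ y, 0 < y → Mop r (Fk r (k+1) g) y = ((k:ℂ)+1) * Fk r k g y := by
      intro y hy
      have hy' : (y : ℂ) ≠ 0 := by exact_mod_cast hy.ne'
      simp only [Mop, (Fk_succ_deriv r k g hg y).deriv]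
      push_cast
      field_simp
    rw [Function.iterate_succ, Function.comp, Mop_iter_congr r (k+1) _ _ H x hx, Mop_iter_smul]
    have := ih x hx
    rw [Nat.factorial_succ]
    push_cast at this ⊢
    linear_combination ((k:ℂ)+1) * this

theorem stmt10 (r : ℕ) (hr : 0 < r) (k : ℕ)
    (g : ℝ → ℂ) (hg : ContinuousOn g (Set.Ici 0)) :
    ∀ x : ℝ, 0 < x →
      ((r / (Nat.factorial k) : ℝ) : ℂ) * ((x ^ (r - 1) : ℝ) : ℂ) *
          (Mop r)^[k + 1]
            (fun s : ℝ => ∫ u in (0:ℝ)..s, g u * (((s ^ r - u ^ r) ^ k : ℝ) : ℂ)) x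
        = g x := by 
  intro x hx
  have hG : Continuous (fun u : ℝ => g (max u 0)) :=
    hg.comp_continuous (by fun_prop) (fun u => le_max_right u 0)
  have H : ∀ s : ℝ, 0 < s →
      (fun s : ℝ => ∫ u in (0:ℝ)..s, g u * (((s ^ r - u ^ r) ^ k : ℝ) : ℂ)) s
        = Fk r k (fun u : ℝ => g (max u 0)) s := by
    intro s hs
    refine intervalIntegral.integral_congr fun u hu => ?_
    rw [Set.uIcc_of_le hs.le] at hu
    simp only [max_eq_left hu.1]
  rw [Mop_iter_congr r (k+1) _ _ H x hx]
  have h := main_cont r hr _ hG k x hx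
  simp only [max_eq_left hx.le] at h
  have hk : (Nat.factorial k : ℂ) ≠ 0 := by exact_mod_cast Nat.factorial_ne_zero k
  push_cast at h ⊢
  field_simp
  linear_combination h
end
end

section
/- Let a > 0, α > 0, and let f, g : ℂ → ℂ be such that for each m ∈ {0,…,r−1} the function (x,u) ↦ f(ω^m u) conj(g(ω^m x)) (x^r − u^r)^{α−1} x^{a−1−r(α−1)} is absolutely integrable over the region {(x,u) : 0 < u < x < ∞}. Then ⟨R_α f, g⟩_a = ⟨f, R_α^* g⟩_a, where R_α^* g(z) = ∫_1^∞ g(zt)(t^r − 1)^{α−1} t^{a−1−r(α−1)} dt. -/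
open Complex MeasureTheory Real Filter Topology

noncomputable section

theorem aux_k1 (r : ℕ) (a b x t : ℝ) (hx : 0 < x) (ht0 : 0 < t) (ht : t ≤ 1) :
    x * ((x ^ r - (x * t) ^ r) ^ (b - 1) * x ^ (a - 1 - r * (b - 1)))
      = (1 - t ^ r) ^ (b - 1) * x ^ a := by
  have h1 : x ^ r - (x * t) ^ r = x ^ r * (1 - t ^ r) := by rw [mul_pow]; ring
  have h2 : (0:ℝ) ≤ 1 - t ^ r := by
    have := pow_le_one₀ (n := r) ht0.le ht
    linarith
  have h3 : x ^ a = x ^ (1:ℝ) * ((x ^ r) ^ (b - 1) * x ^ (a - 1 - r * (b - 1))) := by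
    rw [← Real.rpow_natCast x r, ← Real.rpow_mul hx.le, ← Real.rpow_add hx, ← Real.rpow_add hx]
    congr 1; ring
  rw [h1, Real.mul_rpow (by positivity) h2, h3, Real.rpow_one]
  ring

theorem aux_k2 (r : ℕ) (a b u t : ℝ) (hu : 0 < u) (ht : 1 < t) :
    u * (((u * t) ^ r - u ^ r) ^ (b - 1) * (u * t) ^ (a - 1 - r * (b - 1)))
      = ((t ^ r - 1) ^ (b - 1) * t ^ (a - 1 - r * (b - 1))) * u ^ a := by
  have h1 : (u * t) ^ r - u ^ r = u ^ r * (t ^ r - 1) := by rw [mul_pow]; ring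
  have h2 : (0:ℝ) ≤ t ^ r - 1 := by
    have := one_le_pow₀ (n := r) ht.le
    linarith
  have h3 : u ^ a = u ^ (1:ℝ) * ((u ^ r) ^ (b - 1) * u ^ (a - 1 - r * (b - 1))) := by
    rw [← Real.rpow_natCast u r, ← Real.rpow_mul hu.le, ← Real.rpow_add hu, ← Real.rpow_add hu]
    congr 1; ring
  rw [h1, Real.mul_rpow (by positivity) h2, Real.mul_rpow hu.le (by linarith), h3, Real.rpow_one]
  ring

def auxK (r : ℕ) (a b : ℝ) (f g : ℂ → ℂ) (w : ℂ) (p : ℝ × ℝ) : ℂ :=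
  f (w * p.2) * (starRingEnd ℂ) (g (w * p.1)) *
    ((((p.1 ^ r - p.2 ^ r) ^ (b - 1) * p.1 ^ (a - 1 - r * (b - 1))) : ℝ) : ℂ)

def auxF (r : ℕ) (a b : ℝ) (f g : ℂ → ℂ) (w : ℂ) : ℝ × ℝ → ℂ :=
  Set.indicator {p : ℝ × ℝ | 0 < p.2 ∧ p.2 < p.1} (auxK r a b f g w)

theorem aux_A (r : ℕ) (a b : ℝ) (f g : ℂ → ℂ) (w : ℂ) (x : ℝ) :
    ∫ u, auxF r a b f g w (x, u) = Set.indicator (Set.Ioi (0:ℝ)) (fun x : ℝ =>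
      RopC r b f (w * x) * (starRingEnd ℂ) (g (w * x)) * ((x ^ a : ℝ) : ℂ)) x := by
  have e : (fun u => auxF r a b f g w (x, u)) =
      Set.indicator (Set.Ioo 0 x) (fun u => auxK r a b f g w (x, u)) := by
    funext u
    simp [auxF, Set.indicator_apply]
  rw [e, integral_indicator measurableSet_Ioo]
  by_cases hx : 0 < x
  · rw [Set.indicator_of_mem (by exact hx), ← integral_Ioc_eq_integral_Ioo,
      ← intervalIntegral.integral_of_le hx.le]
    have h := intervalIntegral.smul_integral_comp_mul_left (a := 0) (b := 1)
      (fun u => auxK r a b f g w (x, u)) x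
    rw [mul_zero, mul_one] at h
    rw [← h, ← intervalIntegral.integral_smul, RopC, ← intervalIntegral.integral_mul_const,
      ← intervalIntegral.integral_mul_const, intervalIntegral.integral_of_le zero_le_one,
      intervalIntegral.integral_of_le zero_le_one]
    refine setIntegral_congr_fun measurableSet_Ioc fun t ht => ?_
    have k := congrArg (fun y : ℝ => (y : ℂ)) (aux_k1 r a b x t hx ht.1 ht.2)
    simp only [Complex.ofReal_mul] at k
    simp only [auxK, Complex.real_smul, Complex.ofReal_mul]
    rw [← mul_assoc w]
    linear_combination (f (w * x * t) * (starRingEnd ℂ) (g (w * x))) * k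
  · rw [Set.indicator_of_notMem (by exact hx), Set.Ioo_eq_empty hx]
    simp

theorem aux_B (r : ℕ) (a b : ℝ) (f g : ℂ → ℂ) (w : ℂ) (u : ℝ) :
    ∫ x, auxF r a b f g w (x, u) = Set.indicator (Set.Ioi (0:ℝ)) (fun u : ℝ =>
      f (w * u) * (starRingEnd ℂ) (∫ t in Set.Ioi (1:ℝ),
          g (w * u * t) * ((((t ^ r - 1) ^ (b - 1) * t ^ (a - 1 - r * (b - 1))) : ℝ) : ℂ))
        * ((u ^ a : ℝ) : ℂ)) u := by
  by_cases hu : 0 < u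
  · have e : (fun x => auxF r a b f g w (x, u)) =
        Set.indicator (Set.Ioi u) (fun x => auxK r a b f g w (x, u)) := by
      funext x
      simp [auxF, Set.indicator_apply, hu]
    rw [e, integral_indicator measurableSet_Ioi, Set.indicator_of_mem (by exact hu)]
    have h := integral_comp_mul_left_Ioi (fun x => auxK r a b f g w (x, u)) 1 hu
    rw [mul_one] at h
    have h' : ∫ x in Set.Ioi u, auxK r a b f g w (x, u) =
        u • ∫ t in Set.Ioi (1:ℝ), auxK r a b f g w (u * t, u) := by
      rw [h, smul_smul, mul_inv_cancel₀ hu.ne', one_smul]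
    rw [h', ← integral_smul, ← integral_conj, ← integral_const_mul, ← integral_mul_const]
    refine setIntegral_congr_fun measurableSet_Ioi fun t ht => ?_
    have k := congrArg (fun y : ℝ => (y : ℂ)) (aux_k2 r a b u t hu ht)
    simp only [Complex.ofReal_mul] at k
    simp only [auxK, Complex.real_smul, Complex.ofReal_mul, map_mul, Complex.conj_ofReal]
    rw [← mul_assoc w]
    linear_combination (f (w * u) * (starRingEnd ℂ) (g (w * u * t))) * k
  · rw [Set.indicator_of_notMem (by exact hu)]
    simp [auxF, Set.indicator_apply, hu]

theorem aux_int (r : ℕ) (a b : ℝ) (f g : ℂ → ℂ) (w : ℂ)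
    (h : IntegrableOn (auxK r a b f g w) {p : ℝ × ℝ | 0 < p.2 ∧ p.2 < p.1}) :
    Integrable (auxF r a b f g w) ((volume : Measure ℝ).prod volume) := by
  have hs : MeasurableSet {p : ℝ × ℝ | 0 < p.2 ∧ p.2 < p.1} :=
    (measurableSet_lt measurable_const measurable_snd).inter
      (measurableSet_lt measurable_snd measurable_fst)
  exact (integrable_indicator_iff hs).2 h

theorem stmt14 (r : ℕ) (hr : 2 ≤ r) (a b : ℝ) (ha : 0 < a) (hb : 0 < b) (f g : ℂ → ℂ)
    (hint : ∀ m < r,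
      IntegrableOn
        (fun p : ℝ × ℝ =>
          f (om r ^ m * p.2) * (starRingEnd ℂ) (g (om r ^ m * p.1)) *
            ((((p.1 ^ r - p.2 ^ r) ^ (b - 1) * p.1 ^ (a - 1 - r * (b - 1))) : ℝ) : ℂ))
        {p : ℝ × ℝ | 0 < p.2 ∧ p.2 < p.1}) :
    inr r a (RopC r b f) g =
      inr r a f
        (fun z => ∫ t in Set.Ioi (1:ℝ),
          g (z * t) * ((((t ^ r - 1) ^ (b - 1) * t ^ (a - 1 - r * (b - 1))) : ℝ) : ℂ)) := by
  have hF : ∀ m ∈ Finset.range r, Integrable (auxF r a b f g (om r ^ m))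
      ((volume : Measure ℝ).prod volume) := fun m hm =>
    aux_int r a b f g _ (hint m (Finset.mem_range.1 hm))
  unfold inr
  simp only [Finset.sum_mul]
  rw [integral_finsetSum, integral_finsetSum]
  · refine Finset.sum_congr rfl fun m hm => ?_
    rw [← integral_indicator measurableSet_Ioi, ← integral_indicator measurableSet_Ioi]
    simp only [← aux_A, ← aux_B]
    exact integral_integral_swap (hF m hm)
  · intro m hm
    rw [← IntegrableOn, ← integrable_indicator_iff measurableSet_Ioi]
    exact (hF m hm).integral_prod_right.congr
      (Eventually.of_forall fun u => aux_B r a b f g _ u)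
  · intro m hm
    rw [← IntegrableOn, ← integrable_indicator_iff measurableSet_Ioi]
    exact (hF m hm).integral_prod_left.congr
      (Eventually.of_forall fun x => aux_A r a b f g _ x)
end
end

section
/- For every integer r ≥ 2 and every z ∈ ℂ, (1/r) Σ_{k=0}^{r−1} exp(θ ω^k z) = Σ_{n=0}^∞ (−1)^n z^{nr} / ((1)_n (1−1/r)_n ⋯ (1−(r−1)/r)_n r^{nr}), where ω = exp(2πi/r) and θ = exp(iπ/r). That is, the r-even part T_0 of the function z ↦ e^{θz} equals the generalized cosine cos_r. -/
open Complex MeasureTheory Real Filter Topology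

noncomputable section

theorem aux_fact (r : ℕ) (hr : 2 ≤ r) (n : ℕ) :
    (∏ i ∈ Finset.range r, ((poch (1 - (i : ℝ) / r) n : ℝ) : ℂ)) * (r : ℂ) ^ (n * r)
      = ((n * r).factorial : ℂ) := by
  have hr0 : (r : ℂ) ≠ 0 := by
    have : r ≠ 0 := by omega
    exact_mod_cast this
  induction n with
  | zero => simp [poch]
  | succ n ih =>
    have h1 : ∀ i : ℕ, ((poch (1 - (i : ℝ) / r) (n + 1) : ℝ) : ℂ)
        = ((poch (1 - (i : ℝ) / r) n : ℝ) : ℂ) * (1 - (i : ℂ) / r + n) := by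
      intro i
      simp [poch, ascPochhammer_succ_eval]
    have h2 : (((n + 1) * r).factorial : ℂ) = ((n * r).factorial : ℂ) *
        ∏ i ∈ Finset.range r, ((n : ℂ) * r + 1 + i) := by
      rw [show (n + 1) * r = n * r + r by ring, ← Nat.factorial_mul_ascFactorial,
        Nat.ascFactorial_eq_prod_range]
      push_cast
      rfl
    have h3 : (∏ i ∈ Finset.range r, (1 - (i : ℂ) / r + n)) * (r : ℂ) ^ r
        = ∏ i ∈ Finset.range r, ((n : ℂ) * r + 1 + i) := by
      rw [← Finset.prod_range_reflect (fun i : ℕ => ((n : ℂ) * r + 1 + i))]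
      conv_lhs => rw [← Finset.card_range r, ← Finset.prod_const, Finset.card_range r]
      rw [← Finset.prod_mul_distrib]
      refine Finset.prod_congr rfl fun i hi => ?_
      have hi' : i < r := Finset.mem_range.mp hi
      have : ((r - 1 - i : ℕ) : ℂ) = r - 1 - i := by
        rw [Nat.cast_sub (by omega), Nat.cast_sub (by omega)]
        simp
      rw [this]
      field_simp
      ring
    simp only [h1]
    rw [Finset.prod_mul_distrib, h2, ← h3, ← ih, add_mul, one_mul, pow_add]
    ring

theorem stmt16 (r : ℕ) (hr : 2 ≤ r) :
    ∀ z : ℂ, (r : ℂ)⁻¹ * ∑ k ∈ Finset.range r, Complex.exp (th r * (om r ^ k * z)) = cosr r z := by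
  intro z
  have hr1 : r ≠ 0 := by omega
  have hr0 : (r : ℂ) ≠ 0 := by exact_mod_cast hr1
  have hom : IsPrimitiveRoot (om r) r := Complex.isPrimitiveRoot_exp r hr1
  have hth : th r ^ r = -1 := by
    rw [th, ← Complex.exp_nat_mul, mul_div_cancel₀ _ hr0, Complex.exp_pi_mul_I]
  have hE : ∀ w : ℂ, HasSum (fun m : ℕ => w ^ m / (m.factorial : ℂ)) (Complex.exp w) := by
    intro w
    rw [Complex.exp_eq_exp_ℂ]
    exact NormedSpace.exp_series_hasSum_exp' (𝕂 := ℂ) w |> fun h => by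
      simpa [div_eq_inv_mul] using h
  have hS := (hasSum_sum (s := Finset.range r)
    (fun k _ => hE (th r * (om r ^ k * z)))).mul_left (r : ℂ)⁻¹
  have hinj : Function.Injective (fun n : ℕ => n * r) := fun a b h =>
    Nat.eq_of_mul_eq_mul_right (by omega) h
  have hsum : ∀ m : ℕ, (r : ℂ)⁻¹ * ∑ k ∈ Finset.range r,
      (th r * (om r ^ k * z)) ^ m / (m.factorial : ℂ)
      = (r : ℂ)⁻¹ * ((∑ k ∈ Finset.range r, (om r ^ m) ^ k) *
        ((th r * z) ^ m / (m.factorial : ℂ))) := by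
    intro m
    rw [Finset.sum_mul]
    congr 1
    refine Finset.sum_congr rfl fun k _ => ?_
    rw [← pow_mul, mul_pow, mul_pow, mul_pow, ← pow_mul, mul_comm k m]
    ring
  simp only [hsum] at hS
  rw [← hinj.hasSum_iff] at hS
  · rw [← hS.tsum_eq, cosr]
    refine tsum_congr fun n => ?_
    rw [aux_fact r hr n]
    have h1 : om r ^ (n * r) = 1 := by rw [mul_comm, pow_mul, hom.pow_eq_one, one_pow]
    have h2 : th r ^ (n * r) = (-1) ^ n := by rw [mul_comm, pow_mul, hth]
    simp only [Function.comp, h1, mul_pow, h2, one_pow, Finset.sum_const, Finset.card_range,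
      nsmul_eq_mul, mul_one]
    rw [inv_mul_cancel_left₀ hr0]
  · intro m hm
    have hne : om r ^ m ≠ 1 := by
      intro h
      obtain ⟨c, hc⟩ := (hom.pow_eq_one_iff_dvd m).mp h
      exact hm ⟨c, by simp [hc, mul_comm]⟩
    have : ∑ k ∈ Finset.range r, (om r ^ m) ^ k = 0 := by
      rw [geom_sum_eq hne, ← pow_mul, mul_comm m r, pow_mul, hom.pow_eq_one]
      simp
    rw [this]
    simp
end
end

section
/- Let f : ℂ → ℂ be complex differentiable on ℂ∖{0}, a ∈ ℝ, and k ≥ 0 an integer. Then L_a(T_k f)(x) = T_{k+1}(L_a f)(x) for all x ∈ ℂ∖{0}. Consequently, if f is r-times complex differentiable on ℂ∖{0}, then Δ_μ(T_k f)(x) = T_k(Δ_μ f)(x) for all x ∈ ℂ∖{0}, where indices of T are taken modulo r. -/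
open Complex MeasureTheory Real Filter Topology

noncomputable section

theorem aux_om_ne (r n : ℕ) : om r ^ n ≠ 0 := pow_ne_zero _ (Complex.exp_ne_zero _)

theorem aux_om_pow (r : ℕ) (hr : r ≠ 0) : om r ^ r = 1 :=
  (Complex.isPrimitiveRoot_exp r hr).pow_eq_one

theorem aux_step (r : ℕ) (a : ℝ) (k : ℕ) (f : ℂ → ℂ)
    (hf : DifferentiableOn ℂ f {(0:ℂ)}ᶜ) (x : ℂ) (hx : x ≠ 0) :
    Lop a (Tk r k f) x = Tk r (k + 1) (Lop a f) x := by
  have hd : HasDerivAt (Tk r k f)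
      ((r : ℂ)⁻¹ * ∑ n ∈ Finset.range r,
        om r ^ (k * n) * (deriv f (om r ^ n * x) * (om r ^ n * 1))) x := by
    unfold Tk
    refine HasDerivAt.const_mul _ (HasDerivAt.fun_sum fun n _ => HasDerivAt.const_mul _ ?_)
    have hne : om r ^ n * x ≠ 0 := mul_ne_zero (aux_om_ne r n) hx
    have h1 : HasDerivAt f (deriv f (om r ^ n * x)) (om r ^ n * x) :=
      (hf.differentiableAt (isOpen_compl_singleton.mem_nhds hne)).hasDerivAt
    exact HasDerivAt.comp x h1 ((hasDerivAt_id x).const_mul (om r ^ n))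
  unfold Lop
  rw [hd.deriv]
  unfold Tk
  rw [mul_left_comm, ← mul_add, Finset.mul_sum, ← Finset.sum_add_distrib]
  congr 1
  refine Finset.sum_congr rfl fun n _ => ?_
  have hn := aux_om_ne r n
  rw [add_mul, one_mul, pow_add]
  field_simp

theorem aux_diff (a : ℝ) (f : ℂ → ℂ) (hf : DifferentiableOn ℂ f {(0:ℂ)}ᶜ) :
    DifferentiableOn ℂ (Lop a f) {(0:ℂ)}ᶜ := by
  unfold Lop
  refine (hf.deriv isOpen_compl_singleton).add (DifferentiableOn.mul ?_ hf)
  exact (differentiableOn_const _).div differentiableOn_id (fun x hx => hx)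

theorem aux_congr (a : ℝ) (f g : ℂ → ℂ) (h : ∀ x : ℂ, x ≠ 0 → f x = g x) (x : ℂ) (hx : x ≠ 0) :
    Lop a f x = Lop a g x := by
  have he : f =ᶠ[𝓝 x] g := by
    filter_upwards [isOpen_compl_singleton.mem_nhds hx] with y hy using h y hy
  unfold Lop
  rw [he.deriv_eq, h x hx]

theorem aux_iter (r : ℕ) (α : ℕ → ℝ) (k : ℕ) (f : ℂ → ℂ)
    (hf : DifferentiableOn ℂ f {(0:ℂ)}ᶜ) (m : ℕ) :
    DifferentiableOn ℂ (Lcomp r α m f) {(0:ℂ)}ᶜ ∧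
    ∀ x : ℂ, x ≠ 0 → Lcomp r α m (Tk r k f) x = Tk r (k + m) (Lcomp r α m f) x := by
  induction m with
  | zero => exact ⟨hf, fun x _ => rfl⟩
  | succ m ih =>
    have hs : ∀ g, Lcomp r α (m + 1) g = Lop (acoef r α m) (Lcomp r α m g) := by
      intro g
      simp [Lcomp, List.range_succ]
    rw [hs, hs]
    refine ⟨aux_diff _ _ ih.1, fun x hx => ?_⟩
    rw [aux_congr _ _ _ ih.2 x hx, aux_step r _ _ _ ih.1 x hx, add_assoc]

theorem stmt17 (r : ℕ) (hr : 2 ≤ r) (α : ℕ → ℝ) (a : ℝ) (k : ℕ) (f : ℂ → ℂ)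
    (hf : DifferentiableOn ℂ f {(0:ℂ)}ᶜ) :
    (∀ x : ℂ, x ≠ 0 → Lop a (Tk r k f) x = Tk r (k + 1) (Lop a f) x) ∧
    (ContDiffOn ℂ r f {(0:ℂ)}ᶜ →
      ∀ x : ℂ, x ≠ 0 → Delta r α (Tk r k f) x = Tk r k (Delta r α f) x) := by
  have hr0 : r ≠ 0 := by omega
  refine ⟨fun x hx => aux_step r a k f hf x hx, fun _ x hx => ?_⟩
  have h := (aux_iter r α k f hf r).2 x hx
  have h2 : Tk r (k + r) (Delta r α f) x = Tk r k (Delta r α f) x := by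
    unfold Tk
    congr 1
    refine Finset.sum_congr rfl fun n _ => ?_
    rw [add_mul, pow_add, pow_mul (om r) r n, aux_om_pow r hr0, one_pow, mul_one]
  rw [← h2]
  exact h
end
end
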